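/- If I and J are *-homogeneous ideals of D with M(I) = M(J) (i.e., I and J are similar), then (IJ)* is a *-homogeneous ideal with M((IJ)*) = M(I) = M(J). -/

import Mathlib

open scoped nonZeroDivisors

/-- A star operation on the nonzero fractional ideals of an integral domain `D`
with quotient field `K`: it fixes nonzero principal fractional ideals, commutes with
multiplication by nonzero principal fractional ideals, is extensive, monotone and
idempotent (on nonzero fractional ideals). -/
structure StarOperation (D K : Type*) [CommRing D] [IsDomain D] [Field K]
    [Algebra D K] [IsFractionRing D K] where
  star : FractionalIdeal D⁰ K → FractionalIdeal D⁰ K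
  star_spanSingleton : ∀ x : K, x ≠ 0 →
    star (FractionalIdeal.spanSingleton D⁰ x) = FractionalIdeal.spanSingleton D⁰ x
  star_smul : ∀ (x : K) (I : FractionalIdeal D⁰ K), x ≠ 0 → I ≠ 0 →
    star (FractionalIdeal.spanSingleton D⁰ x * I) = FractionalIdeal.spanSingleton D⁰ x * star I
  le_star : ∀ I : FractionalIdeal D⁰ K, I ≠ 0 → I ≤ star I
  star_mono : ∀ I J : FractionalIdeal D⁰ K, I ≠ 0 → J ≠ 0 → I ≤ J → star I ≤ star J
  star_idem : ∀ I : FractionalIdeal D⁰ K, I ≠ 0 → star (star I) = star I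

namespace StarOperation

variable {D K : Type*} [CommRing D] [IsDomain D] [Field K] [Algebra D K] [IsFractionRing D K]
variable (s : StarOperation D K)

/-- `*` has finite character: for every nonzero fractional ideal `I`, `I^*` is the union
of `J^*` over the nonzero finitely generated fractional subideals `J` of `I`. -/
def FiniteCharacter : Prop :=
  ∀ I : FractionalIdeal D⁰ K, I ≠ 0 → ∀ x ∈ s.star I,
    ∃ J : FractionalIdeal D⁰ K, J ≠ 0 ∧ (J : Submodule D K).FG ∧ J ≤ I ∧ x ∈ s.star J

/-- A (nonzero) integral ideal `I` of `D` is a `*`-ideal if `I^* = I`. -/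
def IsStarIdeal (I : Ideal D) : Prop :=
  I ≠ ⊥ ∧ s.star (I : FractionalIdeal D⁰ K) = (I : FractionalIdeal D⁰ K)

/-- An integral ideal `I` of `D` is a `*`-ideal of finite type if `I = J^*` for some
nonzero finitely generated ideal `J`. -/
def IsFiniteTypeStarIdeal (I : Ideal D) : Prop :=
  ∃ J : Ideal D, J ≠ ⊥ ∧ J.FG ∧
    s.star (J : FractionalIdeal D⁰ K) = (I : FractionalIdeal D⁰ K)

/-- A maximal `*`-ideal: maximal among proper integral `*`-ideals. -/
def IsMaxStarIdeal (M : Ideal D) : Prop :=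
  M ≠ ⊤ ∧ s.IsStarIdeal M ∧ ∀ J : Ideal D, J ≠ ⊤ → s.IsStarIdeal J → M ≤ J → J = M

/-- `I` is `*`-homogeneous: a proper `*`-ideal of finite type such that `(J + J')^* ≠ D`
for every pair `J`, `J'` of proper `*`-ideals of finite type containing `I`. -/
def IsHomog (I : Ideal D) : Prop :=
  I ≠ ⊤ ∧ s.IsStarIdeal I ∧ s.IsFiniteTypeStarIdeal I ∧
    ∀ J J' : Ideal D, J ≠ ⊤ → J' ≠ ⊤ → s.IsStarIdeal J → s.IsStarIdeal J' →
      s.IsFiniteTypeStarIdeal J → s.IsFiniteTypeStarIdeal J' → I ≤ J → I ≤ J' →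
      s.star ((J + J' : Ideal D) : FractionalIdeal D⁰ K) ≠ 1

/-- The set `M(I) = {x ∈ D : (xD + I)^* ≠ D}` attached to an ideal `I`. -/
def MSet (I : Ideal D) : Set D :=
  {x : D | s.star ((Ideal.span {x} + I : Ideal D) : FractionalIdeal D⁰ K) ≠ 1}

/-- `A` and `B` are `*`-comaximal if `(A + B)^* = D`. -/
def StarComaximal (A B : Ideal D) : Prop :=
  s.star ((A + B : Ideal D) : FractionalIdeal D⁰ K) = 1

/-- An integral ideal `I` is `*`-invertible if `(I · I⁻¹)^* = D`. -/
def StarInvertible (I : Ideal D) : Prop :=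
  s.star ((I : FractionalIdeal D⁰ K) * (I : FractionalIdeal D⁰ K)⁻¹) = 1

/-- `D` is a `*`-SH domain: every principal ideal generated by a nonzero nonunit is a
`*`-product of finitely many `*`-homogeneous ideals. -/
def IsSHDomain : Prop :=
  ∀ x : D, x ≠ 0 → ¬IsUnit x →
    ∃ T : Multiset (Ideal D), (∀ J ∈ T, s.IsHomog J) ∧
      s.star ((T.prod : Ideal D) : FractionalIdeal D⁰ K) =
        ((Ideal.span {x} : Ideal D) : FractionalIdeal D⁰ K)

/-- `D` has finite `*`-character: every nonzero nonunit lies in only finitely many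
maximal `*`-ideals. -/
def FiniteStarCharacter : Prop :=
  ∀ x : D, x ≠ 0 → ¬IsUnit x → {P : Ideal D | s.IsMaxStarIdeal P ∧ x ∈ P}.Finite

end StarOperation

/-!
Among `*`-ideals of finite type, homogeneity of `I` is visible in the set `M(I)` alone: it says
that `M(I)` is nonempty and that no finite subset of it generates an ideal with closure `D`.
On the other hand `(A + B)(A + C) ⊆ A + BC` shows that an ideal `*`-comaximal to two ideals is
`*`-comaximal to their product, whence `M((IJ)*) = M(I) ∪ M(J)`. If `M(I) = M(J)`, the finite type
`*`-ideal `(IJ)*` thus has the same `M` as the homogeneous ideal `I`, so it is homogeneous.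
-/

namespace StarOperation

section

variable {D K : Type*} [CommRing D] [IsDomain D] [Field K] [Algebra D K] [IsFractionRing D K]
variable (s : StarOperation D K) {A B C I J : Ideal D}

theorem star_one : s.star 1 = 1 := by
  simpa only [FractionalIdeal.spanSingleton_one] using s.star_spanSingleton 1 one_ne_zero

theorem star_coeIdeal_le_one (hA : A ≠ ⊥) : s.star (A : FractionalIdeal D⁰ K) ≤ 1 := by
  rw [← s.star_one]
  exact s.star_mono _ _ (FractionalIdeal.coeIdeal_ne_zero.mpr hA) one_ne_zero
    FractionalIdeal.coeIdeal_le_one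

theorem star_coeIdeal_mono (hA : A ≠ ⊥) (hAB : A ≤ B) :
    s.star (A : FractionalIdeal D⁰ K) ≤ s.star (B : FractionalIdeal D⁰ K) :=
  s.star_mono _ _ (FractionalIdeal.coeIdeal_ne_zero.mpr hA)
    (FractionalIdeal.coeIdeal_ne_zero.mpr (ne_bot_of_le_ne_bot hA hAB))
    ((FractionalIdeal.coeIdeal_le_coeIdeal K).mpr hAB)

/-- The closure operator `A ↦ A*` on integral ideals. The axioms of a star operation leave the
value at the zero ideal open; here the zero ideal is declared closed. -/
def closure : ClosureOperator (Ideal D) :=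
  .ofCompletePred
    (fun A => A = ⊥ ∨ s.star (A : FractionalIdeal D⁰ K) = (A : FractionalIdeal D⁰ K)) <| by
    intro T hT
    refine or_iff_not_imp_left.mpr fun h0 => le_antisymm ?_ ?_
    · obtain ⟨B, hB⟩ :=
        FractionalIdeal.le_one_iff_exists_coeIdeal.mp (s.star_coeIdeal_le_one h0)
      rw [← hB, FractionalIdeal.coeIdeal_le_coeIdeal]
      refine le_sInf fun A hA => ?_
      have hA0 : A ≠ ⊥ := ne_bot_of_le_ne_bot h0 (sInf_le hA)
      rw [← FractionalIdeal.coeIdeal_le_coeIdeal K, hB, ← (hT A hA).resolve_left hA0]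
      exact s.star_coeIdeal_mono h0 (sInf_le hA)
    · exact s.le_star _ (FractionalIdeal.coeIdeal_ne_zero.mpr h0)

theorem closure_isClosed_iff : s.closure.IsClosed A ↔
    A = ⊥ ∨ s.star (A : FractionalIdeal D⁰ K) = (A : FractionalIdeal D⁰ K) :=
  Iff.rfl

theorem closure_bot : s.closure ⊥ = ⊥ :=
  (s.closure_isClosed_iff.mpr (.inl rfl)).closure_eq

theorem closure_ne_bot (hA : A ≠ ⊥) : s.closure A ≠ ⊥ :=
  ne_bot_of_le_ne_bot hA (s.closure.le_closure A)

theorem star_closure (hA : A ≠ ⊥) : s.star (s.closure A : FractionalIdeal D⁰ K) = s.closure A :=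
  (s.closure_isClosed_iff.mp (s.closure.isClosed_closure A)).resolve_left (s.closure_ne_bot hA)

theorem coe_closure (hA : A ≠ ⊥) :
    (s.closure A : FractionalIdeal D⁰ K) = s.star (A : FractionalIdeal D⁰ K) := by
  have hA' := FractionalIdeal.coeIdeal_ne_zero (K := K).mpr hA
  obtain ⟨B, hB⟩ := FractionalIdeal.le_one_iff_exists_coeIdeal.mp (s.star_coeIdeal_le_one hA)
  have hAB : A ≤ B := by
    rw [← FractionalIdeal.coeIdeal_le_coeIdeal K, hB]
    exact s.le_star _ hA'
  have hB_closed : s.closure.IsClosed B :=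
    s.closure_isClosed_iff.mpr (.inr (by rw [hB, s.star_idem _ hA']))
  apply le_antisymm
  · rw [← hB, FractionalIdeal.coeIdeal_le_coeIdeal]
    exact ClosureOperator.closure_min hAB hB_closed
  · rw [← s.star_closure hA]
    exact s.star_coeIdeal_mono hA (s.closure.le_closure A)

theorem star_coeIdeal_eq_one_iff (hA : A ≠ ⊥) :
    s.star (A : FractionalIdeal D⁰ K) = 1 ↔ s.closure A = ⊤ := by
  rw [← s.coe_closure hA, FractionalIdeal.coeIdeal_eq_one, Ideal.one_eq_top]

theorem closure_eq_top_mono (hAB : A ≤ B) (hA : s.closure A = ⊤) : s.closure B = ⊤ :=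
  top_le_iff.mp (hA ▸ s.closure.monotone hAB)

theorem closure_span_singleton_mul (a : D) (B : Ideal D) :
    s.closure (Ideal.span {a} * B) = Ideal.span {a} * s.closure B := by
  rcases eq_or_ne a 0 with rfl | ha
  · simp [closure_bot]
  rcases eq_or_ne B ⊥ with rfl | hB
  · simp [closure_bot]
  have haB : Ideal.span {a} * B ≠ ⊥ :=
    mul_ne_zero (mt Ideal.span_singleton_eq_bot.mp ha) hB
  rw [← FractionalIdeal.coeIdeal_inj (K := K), s.coe_closure haB, FractionalIdeal.coeIdeal_mul,
    FractionalIdeal.coeIdeal_mul, FractionalIdeal.coeIdeal_span_singleton, s.coe_closure hB]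
  exact s.star_smul _ _ (by simpa using ha) (FractionalIdeal.coeIdeal_ne_zero.mpr hB)

theorem mul_closure_le (A B : Ideal D) : A * s.closure B ≤ s.closure (A * B) :=
  Ideal.mul_le.mpr fun a ha b hb => by
    have hab : a * b ∈ s.closure (Ideal.span {a} * B) := by
      rw [closure_span_singleton_mul]
      exact Ideal.mul_mem_mul (Ideal.mem_span_singleton_self a) hb
    exact s.closure.monotone
      (Ideal.mul_mono_left ((Ideal.span_singleton_le_iff_mem A).mpr ha)) hab

theorem closure_mul_closure_right (A B : Ideal D) :
    s.closure (A * s.closure B) = s.closure (A * B) :=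
  le_antisymm (s.closure.le_closure_iff.mp (s.mul_closure_le A B))
    (s.closure.monotone (Ideal.mul_mono_right (s.closure.le_closure B)))

theorem closure_mul_closure (A B : Ideal D) :
    s.closure (s.closure A * s.closure B) = s.closure (A * B) := by
  rw [closure_mul_closure_right, mul_comm, closure_mul_closure_right, mul_comm]

theorem closure_sup_mul_eq_top (hB : s.closure (A ⊔ B) = ⊤) (hC : s.closure (A ⊔ C) = ⊤) :
    s.closure (A ⊔ B * C) = ⊤ := by
  have hle : (A ⊔ B) * (A ⊔ C) ≤ A ⊔ B * C := by
    rw [Ideal.sup_mul, Ideal.mul_sup B]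
    exact sup_le (Ideal.mul_le_left.trans le_sup_left)
      (sup_le_sup_right Ideal.mul_le_right _)
  refine s.closure_eq_top_mono hle ?_
  rw [← closure_mul_closure, hB, hC, Ideal.mul_top, s.closure.closure_top]

variable {s}

theorem isStarIdeal_iff : s.IsStarIdeal A ↔ A ≠ ⊥ ∧ s.closure.IsClosed A :=
  and_congr_right fun hA => by rw [closure_isClosed_iff, or_iff_right hA]

theorem isFiniteTypeStarIdeal_iff :
    s.IsFiniteTypeStarIdeal A ↔ ∃ F : Ideal D, F ≠ ⊥ ∧ F.FG ∧ s.closure F = A :=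
  exists_congr fun F => and_congr_right fun hF => by
    rw [← s.coe_closure hF, FractionalIdeal.coeIdeal_inj]

theorem IsFiniteTypeStarIdeal.isStarIdeal (hA : s.IsFiniteTypeStarIdeal A) : s.IsStarIdeal A := by
  obtain ⟨F, hF0, -, rfl⟩ := isFiniteTypeStarIdeal_iff.mp hA
  exact isStarIdeal_iff.mpr ⟨s.closure_ne_bot hF0, s.closure.isClosed_closure F⟩

theorem IsFiniteTypeStarIdeal.closure_sup (hA : A.FG) (hB : s.IsFiniteTypeStarIdeal B) :
    s.IsFiniteTypeStarIdeal (s.closure (A ⊔ B)) := by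
  obtain ⟨F, hF0, hF, rfl⟩ := isFiniteTypeStarIdeal_iff.mp hB
  exact isFiniteTypeStarIdeal_iff.mpr ⟨A ⊔ F, ne_bot_of_le_ne_bot hF0 le_sup_right,
    Submodule.FG.sup hA hF, (s.closure.closure_sup_closure_right A F).symm⟩

theorem IsFiniteTypeStarIdeal.closure_mul (hA : s.IsFiniteTypeStarIdeal A)
    (hB : s.IsFiniteTypeStarIdeal B) : s.IsFiniteTypeStarIdeal (s.closure (A * B)) := by
  obtain ⟨F, hF0, hF, rfl⟩ := isFiniteTypeStarIdeal_iff.mp hA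
  obtain ⟨G, hG0, hG, rfl⟩ := isFiniteTypeStarIdeal_iff.mp hB
  exact isFiniteTypeStarIdeal_iff.mpr
    ⟨F * G, mul_ne_zero hF0 hG0, hF.mul hG, (s.closure_mul_closure F G).symm⟩

theorem mem_mSet_iff (hI : I ≠ ⊥) {x : D} :
    x ∈ s.MSet I ↔ s.closure (Ideal.span {x} ⊔ I) ≠ ⊤ :=
  (s.star_coeIdeal_eq_one_iff (ne_bot_of_le_ne_bot hI le_sup_right)).not

theorem mSet_closure (I : Ideal D) : s.MSet (s.closure I) = s.MSet I := by
  rcases eq_or_ne I ⊥ with rfl | hI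
  · rw [closure_bot]
  ext x
  rw [mem_mSet_iff hI, mem_mSet_iff (s.closure_ne_bot hI), s.closure.closure_sup_closure_right]

theorem mSet_anti (hI : I ≠ ⊥) (hIJ : I ≤ J) : s.MSet J ⊆ s.MSet I := fun _ hx =>
  (mem_mSet_iff hI).mpr <| mt (s.closure_eq_top_mono (sup_le_sup_left hIJ _)) <|
    (mem_mSet_iff (ne_bot_of_le_ne_bot hI hIJ)).mp hx

theorem mSet_mul (hI : I ≠ ⊥) (hJ : J ≠ ⊥) : s.MSet (I * J) = s.MSet I ∪ s.MSet J := by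
  have hIJ : I * J ≠ ⊥ := mul_ne_zero hI hJ
  refine Set.Subset.antisymm (fun x hx => ?_)
    (Set.union_subset (mSet_anti hIJ Ideal.mul_le_left) (mSet_anti hIJ Ideal.mul_le_right))
  rw [mem_mSet_iff hIJ] at hx
  rw [Set.mem_union, mem_mSet_iff hI, mem_mSet_iff hJ, ← not_and_or]
  exact fun h => hx (s.closure_sup_mul_eq_top h.1 h.2)

theorem mSet_nonempty_iff (hI : I ≠ ⊥) : (s.MSet I).Nonempty ↔ s.closure I ≠ ⊤ := by
  constructor
  · rintro ⟨x, hx⟩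
    exact mt (s.closure_eq_top_mono le_sup_right) ((mem_mSet_iff hI).mp hx)
  · exact fun h => ⟨0, (mem_mSet_iff hI).mpr (by simpa using h)⟩

theorem subset_mSet (hI : I ≠ ⊥) (hIA : I ≤ A) (hA : s.closure A ≠ ⊤) :
    (A : Set D) ⊆ s.MSet I := fun _ hx =>
  (mem_mSet_iff hI).mpr <|
    mt (s.closure_eq_top_mono (sup_le ((Ideal.span_singleton_le_iff_mem A).mpr hx) hIA)) hA

theorem IsHomog.closure_sup_ne_top (hI : s.IsHomog I) (hA : A.FG) (hB : B.FG)
    (hAI : s.closure (A ⊔ I) ≠ ⊤) (hBI : s.closure (B ⊔ I) ≠ ⊤) :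
    s.closure (A ⊔ B ⊔ I) ≠ ⊤ := by
  obtain ⟨-, -, hIft, hpair⟩ := hI
  have hAft := hIft.closure_sup hA
  have hBft := hIft.closure_sup hB
  have hne := hpair _ _ hAI hBI hAft.isStarIdeal hBft.isStarIdeal hAft hBft
    (le_sup_right.trans (s.closure.le_closure _)) (le_sup_right.trans (s.closure.le_closure _))
  rwa [Ideal.add_eq_sup, Ne,
    s.star_coeIdeal_eq_one_iff (ne_bot_of_le_ne_bot hAft.isStarIdeal.1 le_sup_left),
    s.closure.closure_sup_closure, ← sup_sup_distrib_right] at hne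

theorem IsHomog.closure_span_sup_ne_top (hI : s.IsHomog I) {S : Set D} (hS : S.Finite)
    (hSI : S ⊆ s.MSet I) : s.closure (Ideal.span S ⊔ I) ≠ ⊤ := by
  have hI' := isStarIdeal_iff.mp hI.2.1
  induction S, hS using Set.Finite.induction_on with
  | empty => simpa [hI'.2.closure_eq] using hI.1
  | @insert x S _ hS ih =>
    obtain ⟨hx, hSI⟩ := Set.insert_subset_iff.mp hSI
    rw [Ideal.span_insert]
    exact hI.closure_sup_ne_top (Submodule.fg_span_singleton x) (Submodule.fg_span hS)
      ((mem_mSet_iff hI'.1).mp hx) (ih hSI)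

theorem isHomog_iff : s.IsHomog I ↔ s.IsFiniteTypeStarIdeal I ∧ (s.MSet I).Nonempty ∧
    ∀ S : Set D, S.Finite → S ⊆ s.MSet I → s.closure (Ideal.span S) ≠ ⊤ := by
  constructor
  · intro hI
    obtain ⟨hI0, hI_closed⟩ := isStarIdeal_iff.mp hI.2.1
    exact ⟨hI.2.2.1, (mSet_nonempty_iff hI0).mpr (hI_closed.closure_eq.symm ▸ hI.1),
      fun S hS hSI => mt (s.closure_eq_top_mono le_sup_left) (hI.closure_span_sup_ne_top hS hSI)⟩
  · rintro ⟨hIft, hne, hfin⟩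
    obtain ⟨hI0, hI_closed⟩ := isStarIdeal_iff.mp hIft.isStarIdeal
    refine ⟨hI_closed.closure_eq ▸ (mSet_nonempty_iff hI0).mp hne, hIft.isStarIdeal, hIft, ?_⟩
    intro A B hA hB hA_star _ hAft hBft hIA hIB
    obtain ⟨F, -, hF, rfl⟩ := isFiniteTypeStarIdeal_iff.mp hAft
    obtain ⟨G, -, hG, rfl⟩ := isFiniteTypeStarIdeal_iff.mp hBft
    obtain ⟨S, hS, rfl⟩ := Submodule.fg_def.mp hF
    obtain ⟨T, hT, rfl⟩ := Submodule.fg_def.mp hG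
    have h_subset : ∀ U : Set D, I ≤ s.closure (Ideal.span U) → s.closure (Ideal.span U) ≠ ⊤ →
        U ⊆ s.MSet I := fun U hIU hU =>
      (Ideal.subset_span.trans (s.closure.le_closure _)).trans
        (subset_mSet hI0 hIU (by rwa [s.closure.idempotent]))
    rw [Ideal.add_eq_sup, Ne,
      s.star_coeIdeal_eq_one_iff (ne_bot_of_le_ne_bot hA_star.1 le_sup_left),
      s.closure.closure_sup_closure, ← Submodule.span_union]
    exact hfin _ (hS.union hT) (Set.union_subset (h_subset S hIA hA) (h_subset T hIB hB))

theorem IsHomog.of_mSet_eq (hI : s.IsHomog I) (hJ : s.IsFiniteTypeStarIdeal J)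
    (h : s.MSet J = s.MSet I) : s.IsHomog J := by
  rw [isHomog_iff, h]
  exact ⟨hJ, (isHomog_iff.mp hI).2⟩

end

end StarOperation

theorem isHomog_star_mul_general {D K : Type*} [CommRing D] [IsDomain D] [Field K]
    [Algebra D K] [IsFractionRing D K] (s : StarOperation D K) (I J : Ideal D)
    (hI : s.IsHomog I) (hJ : s.IsFiniteTypeStarIdeal J) (hsim : s.MSet I = s.MSet J) :
    ∃ L : Ideal D,
      (L : FractionalIdeal D⁰ K) = s.star ((I * J : Ideal D) : FractionalIdeal D⁰ K) ∧
      s.IsHomog L ∧ s.MSet L = s.MSet I ∧ s.MSet L = s.MSet J := by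
  have hI0 : I ≠ ⊥ := hI.2.1.1
  have hJ0 : J ≠ ⊥ := hJ.isStarIdeal.1
  have hIJ : I * J ≠ ⊥ := mul_ne_zero hI0 hJ0
  have hM : s.MSet (s.closure (I * J)) = s.MSet I := by
    rw [StarOperation.mSet_closure, StarOperation.mSet_mul hI0 hJ0, ← hsim, Set.union_self]
  exact ⟨s.closure (I * J), s.coe_closure hIJ, hI.of_mSet_eq (hI.2.2.1.closure_mul hJ) hM, hM,
    hM.trans hsim⟩

/-- If `I` and `J` are similar `*`-homogeneous ideals (`M(I) = M(J)`), then
`(IJ)^*` is a `*`-homogeneous ideal with `M((IJ)^*) = M(I) = M(J)`. -/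
theorem isHomog_star_mul {D K : Type*} [CommRing D] [IsDomain D] [Field K]
    [Algebra D K] [IsFractionRing D K] (s : StarOperation D K) (hs : s.FiniteCharacter)
    (I J : Ideal D) (hI : s.IsHomog I) (hJ : s.IsHomog J) (hsim : s.MSet I = s.MSet J) :
    ∃ L : Ideal D,
      (L : FractionalIdeal D⁰ K) = s.star ((I * J : Ideal D) : FractionalIdeal D⁰ K) ∧
      s.IsHomog L ∧ s.MSet L = s.MSet I ∧ s.MSet L = s.MSet J :=
  isHomog_star_mul_general s I J hI hJ.2.2.1 hsim
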